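/- For every real s > 2 there exists a constant K_s > 0 with the following property. Let S be the kernel S(k,ℓ) = Λ(k,ℓ)/|kℓ(k+ℓ)|^{1/2} if kℓ(k+ℓ) ≠ 0 and 0 otherwise, with Λ(k,ℓ) = 2|k+ℓ|·|k|·|ℓ|/(|k+ℓ|+|k|+|ℓ|) for (k,ℓ)≠(0,0) and Λ(0,0)=0. For every measurable f:ℝ→ℂ with f(−k) = conj(f(k)) almost everywhere, with ‖f‖₀ := (∫_ℝ |f(k)|² dk)^{1/2} < ∞ and ‖f‖_s := (∫_ℝ |k|^{2s}|f(k)|² dk)^{1/2} < ∞, and such that (k,ℓ) ↦ (|k|^{2s+1}+|k−ℓ|^{2s+1}+|ℓ|^{2s+1})|S(k−ℓ,ℓ)||f(k−ℓ)||f(ℓ)||f(−k)| is integrable on ℝ², one has | ∬_{ℝ²} k|k|^{2s} S(k−ℓ,ℓ) f(k−ℓ) f(ℓ) f(−k) dℓ dk | ≤ K_s · ‖f‖₀^{1−2/s} · ‖f‖_s^{2+2/s}. -/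

import Mathlib

open MeasureTheory

/-- The kernel `Λ` of the surface-wave amplitude equation. -/
noncomputable def Lam (k l : ℝ) : ℝ :=
  if (k, l) = ((0 : ℝ), (0 : ℝ)) then 0
  else 2 * |k + l| * |k| * |l| / (|k + l| + |k| + |l|)

/-- The kernel `S` of the noncanonical form of the amplitude equation. -/
noncomputable def Sker (k l : ℝ) : ℝ :=
  if k * l * (k + l) ≠ 0 then Lam k l / Real.sqrt |k * l * (k + l)| else 0


lemma Sker_eq (k l : ℝ) :
    Sker k l = 2 * Real.sqrt |k * l * (k + l)| / (|k + l| + |k| + |l|) := by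
  unfold Sker Lam
  by_cases h : k * l * (k + l) = 0
  · simp [h]
  · have hk : k ≠ 0 := by rintro rfl; simp at h
    have h' : 0 < |k * l * (k + l)| := abs_pos.mpr h
    have h2 : 0 < Real.sqrt |k * l * (k + l)| := Real.sqrt_pos.mpr h'
    have h3 : 0 < |k + l| + |k| + |l| := by
      have := abs_pos.mpr hk
      positivity
    have h4 : 2 * |k + l| * |k| * |l| = 2 * (Real.sqrt |k * l * (k + l)| * Real.sqrt |k * l * (k + l)|) := by
      rw [Real.mul_self_sqrt h'.le, abs_mul, abs_mul]; ring
    rw [if_pos h, if_neg (by simp [hk]), h4]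
    field_simp

/-- weight -/
noncomputable def ww (s x : ℝ) : ℝ := x * |x| ^ (2 * s)

/-- symmetric kernel -/
noncomputable def TT (a b c : ℝ) : ℝ := 2 * Real.sqrt |a * b * c| / (|a| + |b| + |c|)

/-- one bounding term -/
noncomputable def QQ (s a b c : ℝ) : ℝ := |b| ^ (3 / 2 : ℝ) * |a| ^ s * |c| ^ s

lemma ww_neg (s x : ℝ) : ww s (-x) = - ww s x := by simp [ww]

lemma QQ_nonneg (s a b c : ℝ) : 0 ≤ QQ s a b c := by unfold QQ; positivity
lemma TT_nonneg (a b c : ℝ) : 0 ≤ TT a b c := by unfold TT; positivity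

lemma core (s : ℝ) (hs : 2 < s) (x y : ℝ) (hy : 0 ≤ y) (hyx : y ≤ x) :
    |ww s x + ww s y + ww s (-(x + y))| * TT x y (-(x + y)) ≤
      ((2 * s + 1) * 2 ^ s) * QQ s x y (-(x + y)) := by
  have hx : 0 ≤ x := hy.trans hyx
  rcases hx.eq_or_lt with rfl | hx0
  · have : y = 0 := le_antisymm hyx hy
    subst this
    simp [TT, QQ]
  have hz : 0 < x + y := by positivity
  have hT : TT x y (-(x + y)) ≤ y ^ (1 / 2 : ℝ) := by
    rw [← Real.sqrt_eq_rpow]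
    unfold TT
    rw [abs_neg, abs_of_nonneg hx, abs_of_nonneg hy, abs_of_pos hz,
      show |x * y * -(x + y)| = x * y * (x + y) by
        rw [mul_neg, abs_neg, abs_of_nonneg (by positivity)]]
    rw [div_le_iff₀ (by positivity)]
    have : Real.sqrt (x * y * (x + y)) ≤ Real.sqrt y * (x + y) := by
      rw [Real.sqrt_le_left (by positivity), mul_pow, Real.sq_sqrt hy]
      nlinarith [mul_nonneg (mul_nonneg hy hy) hz.le]
    linarith
  have hrp : ∀ t : ℝ, 0 ≤ t → ww s t = t ^ (2 * s + 1) := by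
    intro t ht
    unfold ww
    rw [abs_of_nonneg ht, Real.rpow_add_one' ht (by linarith), mul_comm]
  have hD : |ww s x + ww s y + ww s (-(x + y))| ≤ (2 * s + 1) * y * (x + y) ^ (2 * s) := by
    rw [ww_neg, hrp x hx, hrp y hy, hrp _ hz.le]
    have h1 : (x + y) ^ (2 * s + 1) - x ^ (2 * s + 1) ≤ (2 * s + 1) * y * (x + y) ^ (2 * s) := by
      have hb := one_add_mul_self_le_rpow_one_add (s := -(y / (x + y))) (p := 2 * s + 1)
        (by rw [neg_le_neg_iff, div_le_one hz]; linarith) (by linarith)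
      have e : 1 + -(y / (x + y)) = x / (x + y) := by field_simp; ring
      rw [e, Real.div_rpow hx hz.le, le_div_iff₀ (by positivity)] at hb
      have e2 : (x + y) ^ (2 * s + 1) = (x + y) ^ (2 * s) * (x + y) := Real.rpow_add_one hz.ne' _
      have e3 : (1 + (2 * s + 1) * -(y / (x + y))) * (x + y) ^ (2 * s + 1)
        = (x + y) ^ (2 * s + 1) - (2 * s + 1) * y * (x + y) ^ (2 * s) := by
        rw [e2]; field_simp; ring
      linarith
    have h2 : x ^ (2 * s + 1) + y ^ (2 * s + 1) ≤ (x + y) ^ (2 * s + 1) :=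
      Real.add_rpow_le_rpow_add hx hy (by linarith)
    have h3 : 0 ≤ y ^ (2 * s + 1) := by positivity
    rw [abs_le]
    constructor
    · linarith
    · have : 0 ≤ (2 * s + 1) * y * (x + y) ^ (2 * s) := by
        have : 0 ≤ 2 * s + 1 := by linarith
        positivity
      linarith
  have h4 : (x + y) ^ (2 * s) ≤ 2 ^ s * x ^ s * (x + y) ^ s := by
    rw [two_mul s, Real.rpow_add hz, ← Real.mul_rpow (by norm_num) hx]
    gcongr
    linarith
  have hs1 : 0 ≤ 2 * s + 1 := by linarith
  calc _ ≤ ((2 * s + 1) * y * (x + y) ^ (2 * s)) * y ^ (1 / 2 : ℝ) := by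
        gcongr
        exact TT_nonneg _ _ _
    _ ≤ ((2 * s + 1) * y * (2 ^ s * x ^ s * (x + y) ^ s)) * y ^ (1 / 2 : ℝ) := by gcongr
    _ = _ := by
        unfold QQ
        rw [abs_neg, abs_of_nonneg hx, abs_of_nonneg hy, abs_of_pos hz]
        have : y ^ (3 / 2 : ℝ) = y ^ (1 / 2 : ℝ) * y := by
          rw [← Real.rpow_add_one' hy (by norm_num)]; norm_num
        rw [this]; ring

lemma core2 (s : ℝ) (hs : 2 < s) (a b c : ℝ) (ha : 0 ≤ a) (hb : 0 ≤ b) (h : a + b + c = 0) :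
    |ww s a + ww s b + ww s c| * TT a b c ≤
      ((2 * s + 1) * 2 ^ s) * (QQ s a b c + QQ s b c a + QQ s c a b) := by
  have hc : c = -(a + b) := by linarith
  have hs1 : 0 ≤ (2 * s + 1) * (2:ℝ) ^ s := by
    have : 0 ≤ 2 * s + 1 := by linarith
    positivity
  rcases le_total b a with hba | hba
  · have := core s hs a b hb hba
    rw [← hc] at this
    refine this.trans ?_
    gcongr
    linarith [QQ_nonneg s b c a, QQ_nonneg s c a b]
  · have := core s hs b a ha hba
    rw [add_comm b a, ← hc] at this
    have e1 : TT b a c = TT a b c := by unfold TT; rw [mul_comm b a, add_comm |b|]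
    have e2 : QQ s b a c = QQ s c a b := by unfold QQ; ring
    rw [e1, e2, add_comm (ww s b)] at this
    refine this.trans ?_
    gcongr
    linarith [QQ_nonneg s b c a, QQ_nonneg s a b c]

lemma core3 (s : ℝ) (hs : 2 < s) (a b c : ℝ) (hab : 0 ≤ a * b) (h : a + b + c = 0) :
    |ww s a + ww s b + ww s c| * TT a b c ≤
      ((2 * s + 1) * 2 ^ s) * (QQ s a b c + QQ s b c a + QQ s c a b) := by
  rcases mul_nonneg_iff.mp hab with ⟨h1, h2⟩ | ⟨h1, h2⟩
  · exact core2 s hs a b c h1 h2 h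
  · have := core2 s hs (-a) (-b) (-c) (by linarith) (by linarith) (by linarith)
    have e1 : TT (-a) (-b) (-c) = TT a b c := by
      unfold TT; rw [show -a * -b * -c = -(a * b * c) by ring]; simp only [abs_neg]
    have e2 : ∀ a b c, QQ s (-a) (-b) (-c) = QQ s a b c := by
      intro a b c; unfold QQ; simp only [abs_neg]
    rw [e1, e2, e2, e2, ww_neg, ww_neg, ww_neg,
      show -ww s a + -ww s b + -ww s c = -(ww s a + ww s b + ww s c) by ring, abs_neg] at this
    exact this

lemma TT_cyc (a b c : ℝ) : TT b c a = TT a b c := by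
  unfold TT
  rw [show b * c * a = a * b * c by ring, show |b| + |c| + |a| = |a| + |b| + |c| by ring]

lemma core4 (s : ℝ) (hs : 2 < s) (a b c : ℝ) (h : a + b + c = 0) :
    |ww s a + ww s b + ww s c| * TT a b c ≤
      ((2 * s + 1) * 2 ^ s) * (QQ s a b c + QQ s b c a + QQ s c a b) := by
  by_cases h1 : 0 ≤ a * b
  · exact core3 s hs a b c h1 h
  by_cases h2 : 0 ≤ b * c
  · have := core3 s hs b c a h2 (by linarith)
    rw [TT_cyc, show ww s b + ww s c + ww s a = ww s a + ww s b + ww s c by ring] at this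
    linarith
  by_cases h3 : 0 ≤ c * a
  · have := core3 s hs c a b h3 (by linarith)
    rw [← TT_cyc c a b, show ww s c + ww s a + ww s b = ww s a + ww s b + ww s c by ring] at this
    linarith
  exfalso
  push Not at h1 h2 h3
  have : 0 < (a * b) * (b * c) := mul_pos_of_neg_of_neg h1 h2
  nlinarith [mul_pos_of_neg_of_neg h1 h2, sq_nonneg b, mul_nonneg (sq_nonneg b) (sq_nonneg a)]

lemma phi_bound (s : ℝ) (hs : 2 < s) : ∃ C : ℝ, 0 < C ∧ ∀ g : ℝ → ℝ, Measurable g → (∀ k, 0 ≤ g k) →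
    Integrable (fun k : ℝ => g k ^ 2) →
    Integrable (fun k : ℝ => |k| ^ (2 * s) * g k ^ 2) →
    ∀ A B : ℝ, 0 < A → 0 < B → (∫ k, g k ^ 2) = A ^ 2 → (∫ k, |k| ^ (2 * s) * g k ^ 2) = B ^ 2 →
    Integrable (fun k : ℝ => |k| ^ (3 / 2 : ℝ) * g k) ∧
      (∫ k, |k| ^ (3 / 2 : ℝ) * g k) ≤ C * (A ^ (1 - 2 / s) * B ^ (2 / s)) := by
  have hm : Integrable (fun x : ℝ => (1 + |x|) ^ (-(2 * s - 3))) := by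
    have := integrable_one_add_norm (E := ℝ) (μ := volume) (r := 2 * s - 3) (by simp; linarith)
    simpa using this
  set J := ∫ x : ℝ, (1 + |x|) ^ (-(2 * s - 3)) with hJ
  have hJ0 : 0 ≤ J := integral_nonneg (fun x => by positivity)
  refine ⟨J / 2 + 2 ^ (2 * s), by positivity, ?_⟩
  intro g hg hg0 h1 h2 A B hA hB hA2 hB2
  set R : ℝ := (B / A) ^ (1 / s) with hR
  have hR0 : 0 < R := by positivity
  set ε : ℝ := A * R ^ (-(1 / 2) : ℝ) with hε
  have hε0 : 0 < ε := by positivity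
  have hpt : ∀ k : ℝ, |k| ^ (3 / 2 : ℝ) * g k ≤ R ^ (3 / 2 : ℝ) / 2 *
      (ε * (1 + |k / R|) ^ (-(2 * s - 3)) +
        2 ^ (2 * s) / ε * (g k ^ 2 + R ^ (-(2 * s)) * (|k| ^ (2 * s) * g k ^ 2))) := by
    intro k
    set x := |k / R| with hx
    have hx0 : 0 ≤ x := abs_nonneg _
    have hkx : |k| = R * x := by rw [hx, abs_div, abs_of_pos hR0]; field_simp
    rw [hkx, Real.mul_rpow hR0.le hx0, Real.mul_rpow hR0.le hx0]
    have e1 : R ^ (-(2 * s)) * (R ^ (2 * s) * x ^ (2 * s) * g k ^ 2) = x ^ (2 * s) * g k ^ 2 := by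
      rw [Real.rpow_neg hR0.le]
      have : 0 < R ^ (2 * s) := by positivity
      field_simp
    rw [e1]
    set m := (1 + x) ^ (-(2 * s - 3)) with hmm
    have hm0 : 0 < m := by positivity
    have e2 : (x ^ (3 / 2 : ℝ)) ^ 2 = x ^ (3 : ℝ) := by
      rw [← Real.rpow_natCast, ← Real.rpow_mul hx0]; norm_num
    have e3 : (x ^ (3 / 2 : ℝ)) ^ 2 ≤ m * (2 ^ (2 * s) * (1 + x ^ (2 * s))) := by
      have a1 : (1 + x) ^ (2 * s) ≤ 2 ^ (2 * s) * (1 + x ^ (2 * s)) := by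
        rcases le_total x 1 with h | h
        · calc (1 + x) ^ (2 * s) ≤ 2 ^ (2 * s) := by
                apply Real.rpow_le_rpow (by positivity) (by linarith) (by linarith)
            _ ≤ _ := by
                have : 0 ≤ x ^ (2 * s) := by positivity
                have : (0:ℝ) < 2 ^ (2 * s) := by positivity
                nlinarith
        · calc (1 + x) ^ (2 * s) ≤ (2 * x) ^ (2 * s) := by
                apply Real.rpow_le_rpow (by positivity) (by linarith) (by linarith)
            _ = 2 ^ (2 * s) * x ^ (2 * s) := Real.mul_rpow (by norm_num) hx0
            _ ≤ _ := by gcongr; linarith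
      calc _ = x ^ (3 : ℝ) := e2
        _ ≤ (1 + x) ^ (3 : ℝ) := by gcongr; linarith
        _ = m * (1 + x) ^ (2 * s) := by
            rw [hmm, ← Real.rpow_add (by positivity)]; congr 1; ring
        _ ≤ _ := by gcongr
    set y := x ^ (3 / 2 : ℝ) with hy
    set M := 2 ^ (2 * s) * (1 + x ^ (2 * s)) with hM
    have hM0 : 0 < M := by positivity
    have key : y * g k ≤ (ε * m + M / ε * g k ^ 2) / 2 := by
      have h5 : (y * g k) ^ 2 ≤ ((ε * m + M / ε * g k ^ 2) / 2) ^ 2 := by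
        have : (y * g k) ^ 2 ≤ (ε * m) * (M / ε * g k ^ 2) := by
          have : (ε * m) * (M / ε * g k ^ 2) = m * M * g k ^ 2 := by field_simp
          rw [this, mul_pow]; gcongr
        nlinarith [sq_nonneg (ε * m - M / ε * g k ^ 2)]
      exact le_of_sq_le_sq h5 (by positivity)
    calc _ = R ^ (3 / 2 : ℝ) * (y * g k) := by ring
      _ ≤ R ^ (3 / 2 : ℝ) * ((ε * m + M / ε * g k ^ 2) / 2) := by gcongr
      _ = _ := by rw [hM]; ring
  have i1 : Integrable (fun k : ℝ => (1 + |k / R|) ^ (-(2 * s - 3))) := hm.comp_div hR0.ne'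
  have iv1 : ∫ k : ℝ, (1 + |k / R|) ^ (-(2 * s - 3)) = R * J := by
    rw [Measure.integral_comp_div (fun x : ℝ => (1 + |x|) ^ (-(2 * s - 3))) R, abs_of_pos hR0]; rfl
  have i2 : Integrable (fun k : ℝ => g k ^ 2 + R ^ (-(2 * s)) * (|k| ^ (2 * s) * g k ^ 2)) :=
    h1.add (h2.const_mul _)
  have iv2 : ∫ k : ℝ, (g k ^ 2 + R ^ (-(2 * s)) * (|k| ^ (2 * s) * g k ^ 2)) = 2 * A ^ 2 := by
    rw [integral_add h1 (h2.const_mul _), integral_const_mul, hA2, hB2]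
    have : R ^ (-(2 * s)) = A ^ 2 / B ^ 2 := by
      rw [hR, ← Real.rpow_mul (by positivity), show 1 / s * -(2 * s) = -(2:ℝ) by field_simp,
        Real.rpow_neg (by positivity)]
      norm_num [div_pow]
    rw [this]; field_simp; ring
  have i3 := ((i1.const_mul ε).add (i2.const_mul (2 ^ (2 * s) / ε))).const_mul (R ^ (3 / 2 : ℝ) / 2)
  have i4 : Integrable (fun k : ℝ => |k| ^ (3 / 2 : ℝ) * g k) := by
    refine i3.mono' (by fun_prop) (Filter.Eventually.of_forall fun k => ?_)
    rw [Real.norm_of_nonneg (mul_nonneg (by positivity) (hg0 k))]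
    exact hpt k
  refine ⟨i4, (integral_mono i4 i3 hpt).trans (le_of_eq ?_)⟩
  simp only [Pi.add_apply]
  rw [integral_const_mul, integral_add (i1.const_mul ε) (i2.const_mul _), integral_const_mul,
    integral_const_mul, iv1, iv2]
  have r1 : R ^ (3 / 2 : ℝ) = R * R ^ (1 / 2 : ℝ) := by
    rw [← Real.rpow_one_add' hR0.le (by norm_num)]; norm_num
  have r2 : R ^ (-(1 / 2) : ℝ) = (R ^ (1 / 2 : ℝ))⁻¹ := Real.rpow_neg hR0.le _
  have r3 : R ^ (1 / 2 : ℝ) * R ^ (1 / 2 : ℝ) = R := by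
    rw [← Real.rpow_add hR0]; norm_num
  have r4 : A ^ (1 - 2 / s) * B ^ (2 / s) = A * R ^ 2 := by
    rw [hR, ← Real.rpow_natCast, ← Real.rpow_mul (by positivity), Real.rpow_sub hA, Real.rpow_one,
      Real.div_rpow hB.le hA.le]
    rw [show 1 / s * ((2:ℕ):ℝ) = 2 / s by push_cast; ring]
    field_simp
  have r5 : 0 < R ^ (1 / 2 : ℝ) := by positivity
  rw [r4, hε, r1, r2]
  generalize R ^ (1 / 2 : ℝ) = q at *
  rw [← r3]
  field_simp
  try ring

/-- cyclic rotation -/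
def sig (p : ℝ × ℝ) : ℝ × ℝ := (p.2 - p.1, -p.1)

lemma sig_mp : MeasurePreserving sig (volume : Measure (ℝ × ℝ)) volume := by
  have h1 : MeasurePreserving (fun p : ℝ × ℝ => (p.1, -p.1 + p.2)) (volume.prod volume)
      (volume.prod volume) := measurePreserving_prod_neg_add volume volume
  have h2 : MeasurePreserving (Prod.swap : ℝ × ℝ → ℝ × ℝ) (volume.prod volume)
      (volume.prod volume) := Measure.measurePreserving_swap
  have h3 : MeasurePreserving (Prod.map id Neg.neg : ℝ × ℝ → ℝ × ℝ) (volume.prod volume)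
      (volume.prod volume) := (MeasurePreserving.id _).prod (Measure.measurePreserving_neg _)
  have := h3.comp (h2.comp h1)
  have e : sig = Prod.map id Neg.neg ∘ Prod.swap ∘ fun p : ℝ × ℝ => (p.1, -p.1 + p.2) := by
    funext p
    refine Prod.ext ?_ ?_
    · change p.2 - p.1 = -p.1 + p.2
      ring
    · rfl
  rw [e]
  exact this

lemma tau_mp : MeasurePreserving (fun p : ℝ × ℝ => (p.1 - p.2, p.2)) (volume : Measure (ℝ × ℝ))
    volume := by
  have h1 : MeasurePreserving (fun p : ℝ × ℝ => (p.1, -p.1 + p.2)) (volume.prod volume)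
      (volume.prod volume) := measurePreserving_prod_neg_add volume volume
  have h2 : MeasurePreserving (Prod.swap : ℝ × ℝ → ℝ × ℝ) (volume.prod volume)
      (volume.prod volume) := Measure.measurePreserving_swap
  have := h2.comp (h1.comp h2)
  have e : (fun p : ℝ × ℝ => (p.1 - p.2, p.2)) =
      Prod.swap ∘ (fun p : ℝ × ℝ => (p.1, -p.1 + p.2)) ∘ Prod.swap := by
    funext p
    refine Prod.ext ?_ ?_
    · change p.1 - p.2 = -p.2 + p.1
      ring
    · rfl
  rw [e]
  exact this

lemma mp_integral {E : Type*} [NormedAddCommGroup E] [NormedSpace ℝ E]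
    {σ : ℝ × ℝ → ℝ × ℝ} (h : MeasurePreserving σ (volume : Measure (ℝ × ℝ)) volume)
    {g : ℝ × ℝ → E} (hg : Integrable g) : ∫ p, g (σ p) = ∫ p, g p := by
  have := integral_map (μ := volume) (φ := σ) (f := g) h.aemeasurable
    (by rw [h.map_eq]; exact hg.aestronglyMeasurable)
  rw [← this, h.map_eq]

lemma mp_integrable {E : Type*} [NormedAddCommGroup E]
    {σ : ℝ × ℝ → ℝ × ℝ} (h : MeasurePreserving σ (volume : Measure (ℝ × ℝ)) volume)
    {g : ℝ × ℝ → E} (hg : Integrable g) : Integrable (fun p => g (σ p)) :=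
  h.integrable_comp_of_integrable hg

lemma dom (φ v : ℝ → ℝ) (hφ : Integrable φ) (hv : Integrable v) :
    Integrable (fun p : ℝ × ℝ => (φ p.2 * v (p.1 - p.2) + φ p.2 * v (-p.1)) / 2) ∧
    ∫ p : ℝ × ℝ, (φ p.2 * v (p.1 - p.2) + φ p.2 * v (-p.1)) / 2 = (∫ x, φ x) * ∫ x, v x := by
  have a1 : Integrable (fun p : ℝ × ℝ => v p.1 * φ p.2) := hv.mul_prod hφ
  have a2 := mp_integrable tau_mp a1
  have a3 : Integrable (fun p : ℝ × ℝ => v (-p.1) * φ p.2) := (hv.comp_neg).mul_prod hφ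
  have e1 : ∫ p : ℝ × ℝ, v p.1 * φ p.2 = (∫ x, v x) * ∫ x, φ x := integral_prod_mul v φ
  have e2 := mp_integral tau_mp a1
  have e3 : ∫ p : ℝ × ℝ, v (-p.1) * φ p.2 = (∫ x, v (-x)) * ∫ x, φ x :=
    integral_prod_mul (fun x => v (-x)) φ
  rw [integral_neg_eq_self v] at e3
  have e : (fun p : ℝ × ℝ => (φ p.2 * v (p.1 - p.2) + φ p.2 * v (-p.1)) / 2) =
      fun p => (v (p.1 - p.2) * φ p.2 + v (-p.1) * φ p.2) / 2 := by ext p; ring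
  rw [e]
  refine ⟨(a2.add a3).div_const 2, ?_⟩
  rw [integral_div, integral_add a2 a3, e2, e1, e3]; ring

/-- the symmetric trilinear density -/
noncomputable def HH (f : ℝ → ℂ) (p : ℝ × ℝ) : ℂ :=
  (TT (p.1 - p.2) p.2 (-p.1) : ℂ) * f (p.1 - p.2) * f p.2 * f (-p.1)

lemma HH_sig (f : ℝ → ℂ) (p : ℝ × ℝ) : HH f (sig p) = HH f p := by
  unfold HH sig
  have e1 : p.2 - p.1 - -p.1 = p.2 := by ring
  have e2 : -(p.2 - p.1) = p.1 - p.2 := by ring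
  simp only [e1, e2]
  rw [TT_cyc]; ring

lemma Sker_TT (k l : ℝ) : Sker (k - l) l = TT (k - l) l (-k) := by
  rw [Sker_eq, TT]
  simp only [sub_add_cancel, mul_neg, abs_neg]
  congr 1; ring

lemma main_bound (s : ℝ) (hs : 2 < s) (f : ℝ → ℂ) (hf : Measurable f)
    (hφ : Integrable (fun k : ℝ => |k| ^ (3 / 2 : ℝ) * ‖f k‖))
    (hv : Integrable (fun k : ℝ => |k| ^ (2 * s) * ‖f k‖ ^ 2))
    (hw : Integrable (fun p : ℝ × ℝ => (ww s p.1 : ℂ) * HH f p)) :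
    ‖∫ p : ℝ × ℝ, (ww s p.1 : ℂ) * HH f p‖ ≤ (2 * s + 1) * 2 ^ s *
      ((∫ k : ℝ, |k| ^ (3 / 2 : ℝ) * ‖f k‖) * ∫ k : ℝ, |k| ^ (2 * s) * ‖f k‖ ^ 2) := by
  obtain ⟨d1, d2⟩ := dom _ _ hφ hv
  set M : ℝ × ℝ → ℝ := fun p => (|p.2| ^ (3 / 2 : ℝ) * ‖f p.2‖ * (|p.1 - p.2| ^ (2 * s) *
    ‖f (p.1 - p.2)‖ ^ 2) + |p.2| ^ (3 / 2 : ℝ) * ‖f p.2‖ * (|-p.1| ^ (2 * s) * ‖f (-p.1)‖ ^ 2)) / 2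
    with hM
  set D := (∫ k : ℝ, |k| ^ (3 / 2 : ℝ) * ‖f k‖) * ∫ k : ℝ, |k| ^ (2 * s) * ‖f k‖ ^ 2
  have ss : ∀ p : ℝ × ℝ, (sig (sig p)) = (-p.2, p.1 - p.2) := by
    intro p; simp only [sig]; refine Prod.ext ?_ ?_ <;> ring
  set C := (2 * s + 1) * (2 : ℝ) ^ s with hC
  have hC0 : 0 ≤ C := by
    have : 0 ≤ 2 * s + 1 := by linarith
    positivity
  have w1 := mp_integrable sig_mp hw
  have w2 := mp_integrable sig_mp w1
  have v1 := mp_integral sig_mp hw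
  have v2 := (mp_integral sig_mp w1).trans v1
  have m1 := mp_integrable sig_mp d1
  have m2 := mp_integrable sig_mp m1
  have n1 := mp_integral sig_mp d1
  have n2 := (mp_integral sig_mp m1).trans n1
  have hP : ∀ p : ℝ × ℝ, QQ s (p.1 - p.2) p.2 (-p.1) *
      (‖f (p.1 - p.2)‖ * ‖f p.2‖ * ‖f (-p.1)‖) ≤ M p := by
    intro p
    simp only [hM, QQ]
    have e : ∀ t : ℝ, |t| ^ (2 * s) = (|t| ^ s) ^ 2 := by
      intro t
      rw [← Real.rpow_natCast, ← Real.rpow_mul (abs_nonneg t)]; congr 1; push_cast; ring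
    rw [e, e]
    have h0 : 0 ≤ |p.2| ^ (3 / 2 : ℝ) * ‖f p.2‖ := by positivity
    generalize |p.2| ^ (3 / 2 : ℝ) = q at *
    nlinarith [mul_nonneg h0 (sq_nonneg (|p.1 - p.2| ^ s * ‖f (p.1 - p.2)‖ -
      |-p.1| ^ s * ‖f (-p.1)‖))]
  have hsum : (3 : ℂ) * ∫ p : ℝ × ℝ, (ww s p.1 : ℂ) * HH f p =
      ∫ p : ℝ × ℝ, ((ww s p.1 : ℂ) * HH f p + (ww s (sig p).1 : ℂ) * HH f (sig p)) +
        (ww s (sig (sig p)).1 : ℂ) * HH f (sig (sig p)) := by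
    have w3 : Integrable (fun p : ℝ × ℝ => (ww s p.1 : ℂ) * HH f p +
      (ww s (sig p).1 : ℂ) * HH f (sig p)) := hw.add w1
    rw [integral_add w3 w2, integral_add hw w1, v1, v2]; ring
  have hbd : ‖∫ p : ℝ × ℝ, ((ww s p.1 : ℂ) * HH f p + (ww s (sig p).1 : ℂ) * HH f (sig p)) +
        (ww s (sig (sig p)).1 : ℂ) * HH f (sig (sig p))‖ ≤
      ∫ p : ℝ × ℝ, C * (M p + M (sig p) + M (sig (sig p))) := by
    refine norm_integral_le_of_norm_le (((d1.add m1).add m2).const_mul C)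
      (Filter.Eventually.of_forall fun p => ?_)
    have hs1 := hP p
    have hs2 := hP (sig p)
    have hs3 := hP (sig (sig p))
    have hc := core4 s hs (p.1 - p.2) p.2 (-p.1) (by ring)
    rw [HH_sig, HH_sig, HH_sig, ← add_mul, ← add_mul, ← Complex.ofReal_add, ← Complex.ofReal_add,
      norm_mul, Complex.norm_real, Real.norm_eq_abs]
    have hH : ‖HH f p‖ = TT (p.1 - p.2) p.2 (-p.1) *
        (‖f (p.1 - p.2)‖ * ‖f p.2‖ * ‖f (-p.1)‖) := by
      unfold HH
      rw [norm_mul, norm_mul, norm_mul, Complex.norm_real, Real.norm_of_nonneg (TT_nonneg _ _ _)]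
      ring
    have hww : |ww s p.1 + ww s (sig p).1 + ww s (sig (sig p)).1| =
        |ww s (p.1 - p.2) + ww s p.2 + ww s (-p.1)| := by
      rw [ss, ← abs_neg]
      congr 1
      simp only [sig]
      rw [ww_neg, ww_neg, show p.2 - p.1 = -(p.1 - p.2) by ring, ww_neg]; ring
    rw [hH, hww, ← mul_assoc]
    set N := ‖f (p.1 - p.2)‖ * ‖f p.2‖ * ‖f (-p.1)‖ with hN
    have hN0 : 0 ≤ N := by positivity
    have e1 : (sig p).1 - (sig p).2 = p.2 := by simp [sig]
    have e2 : (sig p).2 = -p.1 := rfl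
    have e3 : -(sig p).1 = p.1 - p.2 := by simp [sig]
    have e4 : (sig (sig p)).1 - (sig (sig p)).2 = -p.1 := by rw [ss]; ring
    have e5 : (sig (sig p)).2 = p.1 - p.2 := by rw [ss]
    have e6 : -(sig (sig p)).1 = p.2 := by rw [ss]; ring
    rw [e1, e2, e3, show ‖f p.2‖ * ‖f (-p.1)‖ * ‖f (p.1 - p.2)‖ = N by rw [hN]; ring] at hs2
    rw [e4, e5, e6, show ‖f (-p.1)‖ * ‖f (p.1 - p.2)‖ * ‖f p.2‖ = N by rw [hN]; ring] at hs3
    calc _ ≤ C * (QQ s (p.1 - p.2) p.2 (-p.1) + QQ s p.2 (-p.1) (p.1 - p.2) +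
          QQ s (-p.1) (p.1 - p.2) p.2) * N := by gcongr
      _ = C * (QQ s (p.1 - p.2) p.2 (-p.1) * N + QQ s p.2 (-p.1) (p.1 - p.2) * N +
          QQ s (-p.1) (p.1 - p.2) p.2 * N) := by ring
      _ ≤ _ := by gcongr
  have hval : ∫ p : ℝ × ℝ, C * (M p + M (sig p) + M (sig (sig p))) = C * (3 * D) := by
    have m3 : Integrable (fun p : ℝ × ℝ => M p + M (sig p)) := d1.add m1
    rw [integral_const_mul, integral_add m3 m2, integral_add d1 m1, n1, n2, d2]; ring
  rw [← hsum, hval, norm_mul] at hbd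
  norm_num at hbd
  linarith

theorem trilinear_estimate (s : ℝ) (hs : 2 < s) :
    ∃ K : ℝ, 0 < K ∧ ∀ f : ℝ → ℂ, Measurable f →
      (∀ᵐ k : ℝ, f (-k) = (starRingEnd ℂ) (f k)) →
      Integrable (fun k : ℝ => ‖f k‖ ^ 2) →
      Integrable (fun k : ℝ => |k| ^ (2 * s) * ‖f k‖ ^ 2) →
      Integrable (fun p : ℝ × ℝ =>
        (|p.1| ^ (2 * s + 1) + |p.1 - p.2| ^ (2 * s + 1) + |p.2| ^ (2 * s + 1)) *
          |Sker (p.1 - p.2) p.2| * ‖f (p.1 - p.2)‖ * ‖f p.2‖ * ‖f (-p.1)‖) →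
      ‖∫ p : ℝ × ℝ, ((p.1 * |p.1| ^ (2 * s) : ℝ) : ℂ) * ((Sker (p.1 - p.2) p.2 : ℝ) : ℂ) *
          f (p.1 - p.2) * f p.2 * f (-p.1)‖ ≤
        K * (Real.sqrt (∫ k : ℝ, ‖f k‖ ^ 2)) ^ (1 - 2 / s) *
          (Real.sqrt (∫ k : ℝ, |k| ^ (2 * s) * ‖f k‖ ^ 2)) ^ (2 + 2 / s) := by
  obtain ⟨C, hC, hphi⟩ := phi_bound s hs
  have hs1 : 0 < 2 * s + 1 := by linarith
  refine ⟨(2 * s + 1) * 2 ^ s * C, by positivity, ?_⟩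
  intro f hf _ h0 h2 hint
  have hA0 : 0 ≤ ∫ k : ℝ, ‖f k‖ ^ 2 := integral_nonneg fun k => by positivity
  have hB0 : 0 ≤ ∫ k : ℝ, |k| ^ (2 * s) * ‖f k‖ ^ 2 := integral_nonneg fun k => by positivity
  set A := Real.sqrt (∫ k : ℝ, ‖f k‖ ^ 2) with hA
  set B := Real.sqrt (∫ k : ℝ, |k| ^ (2 * s) * ‖f k‖ ^ 2) with hB
  have hA2 : (∫ k : ℝ, ‖f k‖ ^ 2) = A ^ 2 := (Real.sq_sqrt hA0).symm
  have hB2 : (∫ k : ℝ, |k| ^ (2 * s) * ‖f k‖ ^ 2) = B ^ 2 := (Real.sq_sqrt hB0).symm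
  have hAn : 0 ≤ A := Real.sqrt_nonneg _
  have hBn : 0 ≤ B := Real.sqrt_nonneg _
  have hzero : (∀ᵐ k : ℝ, f k = 0) →
      ‖∫ p : ℝ × ℝ, ((p.1 * |p.1| ^ (2 * s) : ℝ) : ℂ) * ((Sker (p.1 - p.2) p.2 : ℝ) : ℂ) *
          f (p.1 - p.2) * f p.2 * f (-p.1)‖ ≤
        (2 * s + 1) * 2 ^ s * C * A ^ (1 - 2 / s) * B ^ (2 + 2 / s) := by
    intro hz
    have hz2 : ∀ᵐ p : ℝ × ℝ, f p.2 = 0 :=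
      (Measure.quasiMeasurePreserving_snd (μ := (volume : Measure ℝ)) (ν := (volume : Measure ℝ))).ae hz
    rw [integral_eq_zero_of_ae]
    · rw [norm_zero]; positivity
    · filter_upwards [hz2] with p hp
      simp [hp]
  rcases hAn.eq_or_lt with hA' | hA'
  · apply hzero
    have : (∫ k : ℝ, ‖f k‖ ^ 2) = 0 := by rw [hA2, ← hA']; simp
    rw [integral_eq_zero_iff_of_nonneg (fun k => by positivity) h0] at this
    filter_upwards [this] with k hk
    simpa using hk
  rcases hBn.eq_or_lt with hB' | hB'
  · apply hzero
    have : (∫ k : ℝ, |k| ^ (2 * s) * ‖f k‖ ^ 2) = 0 := by rw [hB2, ← hB']; simp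
    rw [integral_eq_zero_iff_of_nonneg (fun k => by positivity) h2] at this
    filter_upwards [this, Measure.ae_ne volume (0 : ℝ)] with k hk hk0
    have h3 : 0 < |k| ^ (2 * s) := Real.rpow_pos_of_pos (abs_pos.mpr hk0) _
    have h4 : |k| ^ (2 * s) * ‖f k‖ ^ 2 = 0 := hk
    simpa [h3.ne'] using h4
  obtain ⟨i1, i2⟩ := hphi (fun k => ‖f k‖) hf.norm (fun k => norm_nonneg _) h0 h2 A B hA' hB' hA2 hB2
  have heq : ∀ p : ℝ × ℝ, ((p.1 * |p.1| ^ (2 * s) : ℝ) : ℂ) * ((Sker (p.1 - p.2) p.2 : ℝ) : ℂ) *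
          f (p.1 - p.2) * f p.2 * f (-p.1) = (ww s p.1 : ℂ) * HH f p := by
    intro p
    rw [Sker_TT]; unfold HH ww; ring
  have hw : Integrable (fun p : ℝ × ℝ => (ww s p.1 : ℂ) * HH f p) := by
    refine hint.mono' ?_ (Filter.Eventually.of_forall fun p => ?_)
    · apply Measurable.aestronglyMeasurable
      unfold ww HH TT
      fun_prop
    · rw [← heq, norm_mul, norm_mul, norm_mul, norm_mul, Complex.norm_real, Complex.norm_real,
        Real.norm_eq_abs, Real.norm_eq_abs]
      gcongr
      rw [abs_mul, abs_of_nonneg (a := |p.1| ^ (2 * s)) (by positivity),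
        Real.rpow_add_one' (abs_nonneg p.1) (by linarith), mul_comm]
      have : 0 ≤ |p.1 - p.2| ^ (2 * s + 1) := by positivity
      have : 0 ≤ |p.2| ^ (2 * s + 1) := by positivity
      linarith
  have hm := main_bound s hs f hf i1 h2 hw
  simp only [heq]
  refine hm.trans ?_
  rw [hB2]
  have e : B ^ (2 + 2 / s) = B ^ 2 * B ^ (2 / s) := by
    rw [Real.rpow_add hB']; norm_num
  rw [e]
  calc _ ≤ (2 * s + 1) * 2 ^ s * ((C * (A ^ (1 - 2 / s) * B ^ (2 / s))) * B ^ 2) := by gcongr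
    _ = _ := by ring
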